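/- Let χ : ℝ → ℝ be smooth with χ supported in {y : |y| > β/20}, χ(y) = −1 for y ≤ −β/10, and χ(y) = 1 for y ≥ β/10. Then for every ε > 0 there exist constants C > 0 and λ₀ > 0 (depending on ε, χ, α, β) such that for every real Dirichlet quasimode datum (u, λ, f) on the stadium S with λ ≥ λ₀, λ² ∫_{∂S ∩ W} w² χ(y) (∂_y u)(∂_N u) dl ≤ C λ⁴ ‖u‖²_{L²(W)} + ε ∫_S (∂_x u)² dA + C λ² ‖f‖²_{L²(S)}, where ‖u‖_{L²(W)} is the L² norm of u over the wings W. -/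

import Mathlib

open MeasureTheory Real Set Filter

noncomputable section

/-- Partial derivative in the first (x) variable. -/
def pdx (u : ℝ × ℝ → ℝ) (p : ℝ × ℝ) : ℝ := deriv (fun t => u (t, p.2)) p.1

/-- Partial derivative in the second (y) variable. -/
def pdy (u : ℝ × ℝ → ℝ) (p : ℝ × ℝ) : ℝ := deriv (fun t => u (p.1, t)) p.2

/-- The positive Laplacian `Δu = -u_xx - u_yy`. -/
def lap (u : ℝ × ℝ → ℝ) (p : ℝ × ℝ) : ℝ := -(pdx (pdx u) p) - (pdy (pdy u) p)

/-- The central rectangle `R = [-α,α] × [-β,β]`. -/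
def Rect (α β : ℝ) : Set (ℝ × ℝ) := Icc (-α) α ×ˢ Icc (-β) β

/-- The wings `W = W₊ ∪ W₋`, two half-discs of radius β centered at `(±α, 0)`. -/
def Wings (α β : ℝ) : Set (ℝ × ℝ) :=
  {p | (p.1 - α) ^ 2 + p.2 ^ 2 ≤ β ^ 2 ∧ α ≤ p.1} ∪
  {p | (p.1 + α) ^ 2 + p.2 ^ 2 ≤ β ^ 2 ∧ p.1 ≤ -α}

/-- The Bunimovich stadium `S = R ∪ W`. -/
def Stadium (α β : ℝ) : Set (ℝ × ℝ) := Rect α β ∪ Wings α β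

/-- The boundary `∂S`: two horizontal segments and two semicircles. -/
def StadiumBoundary (α β : ℝ) : Set (ℝ × ℝ) :=
  {p | |p.1| ≤ α ∧ (p.2 = β ∨ p.2 = -β)} ∪
  {p | (|p.1| - α) ^ 2 + p.2 ^ 2 = β ^ 2 ∧ α ≤ |p.1|}

/-- Boundary integral `∫_{∂S} g dl` of an integrand `g` depending on the boundary point
and the outward unit normal at that point. -/
def bdryInt (α β : ℝ) (g : ℝ × ℝ → ℝ × ℝ → ℝ) : ℝ :=
  (∫ x in (-α)..α, (g (x, β) (0, 1) + g (x, -β) (0, -1))) +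
  β * ∫ θ in (-(π / 2))..(π / 2),
    (g (α + β * cos θ, β * sin θ) (cos θ, sin θ) +
     g (-(α + β * cos θ), β * sin θ) (-cos θ, sin θ))

/-- Boundary integral `∫_{∂S ∩ W} g dl` over the two semicircles only. -/
def bdryIntW (α β : ℝ) (g : ℝ × ℝ → ℝ × ℝ → ℝ) : ℝ :=
  β * ∫ θ in (-(π / 2))..(π / 2),
    (g (α + β * cos θ, β * sin θ) (cos θ, sin θ) +
     g (-(α + β * cos θ), β * sin θ) (-cos θ, sin θ))

/-- The normal derivative `∂_N u = n₁ ∂_x u + n₂ ∂_y u` at a boundary point `p`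
with outward unit normal `n`. -/
def nderiv (u : ℝ × ℝ → ℝ) (p n : ℝ × ℝ) : ℝ := n.1 * pdx u p + n.2 * pdy u p

/-- A real Dirichlet quasimode datum `(u, λ, f)` on the stadium: `λ > 0`, `u` smooth on a
neighborhood of `S`, `u = 0` on `∂S`, and `(Δ - λ²) u = f` on `S`. -/
structure QMDatum (α β : ℝ) where
  u : ℝ × ℝ → ℝ
  lam : ℝ
  f : ℝ × ℝ → ℝ
  lam_pos : 0 < lam
  smooth : ∃ V : Set (ℝ × ℝ), IsOpen V ∧ Stadium α β ⊆ V ∧ ContDiffOn ℝ (⊤ : ℕ∞) u V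
  dirichlet : ∀ p ∈ StadiumBoundary α β, u p = 0
  eqn : ∀ p ∈ Stadium α β, lap u p - lam ^ 2 * u p = f p


open scoped Topology ContDiff Manifold

lemma hasDerivAt_x {u : ℝ × ℝ → ℝ} (hu : ContDiff ℝ ∞ u) (p : ℝ × ℝ) :
    HasDerivAt (fun t => u (t, p.2)) (fderiv ℝ u p (1, 0)) p.1 := by
  have h1 : HasFDerivAt u (fderiv ℝ u p) (p.1, p.2) :=
    (hu.differentiable (by simp) p).hasFDerivAt
  have h2 : HasDerivAt (fun t : ℝ => (t, p.2)) ((1 : ℝ), (0 : ℝ)) p.1 :=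
    (hasDerivAt_id p.1).prodMk (hasDerivAt_const p.1 p.2)
  exact h1.comp_hasDerivAt p.1 h2

lemma hasDerivAt_y {u : ℝ × ℝ → ℝ} (hu : ContDiff ℝ ∞ u) (p : ℝ × ℝ) :
    HasDerivAt (fun t => u (p.1, t)) (fderiv ℝ u p (0, 1)) p.2 := by
  have h1 : HasFDerivAt u (fderiv ℝ u p) (p.1, p.2) :=
    (hu.differentiable (by simp) p).hasFDerivAt
  have h2 : HasDerivAt (fun t : ℝ => (p.1, t)) ((0 : ℝ), (1 : ℝ)) p.2 :=
    (hasDerivAt_const p.2 p.1).prodMk (hasDerivAt_id p.2)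
  exact h1.comp_hasDerivAt p.2 h2

lemma pdx_eq {u : ℝ × ℝ → ℝ} (hu : ContDiff ℝ ∞ u) : pdx u = fun p => fderiv ℝ u p (1, 0) := by
  funext p; exact (hasDerivAt_x hu p).deriv

lemma pdy_eq {u : ℝ × ℝ → ℝ} (hu : ContDiff ℝ ∞ u) : pdy u = fun p => fderiv ℝ u p (0, 1) := by
  funext p; exact (hasDerivAt_y hu p).deriv

lemma hasDx {u : ℝ × ℝ → ℝ} (hu : ContDiff ℝ ∞ u) (x y : ℝ) :
    HasDerivAt (fun t => u (t, y)) (pdx u (x, y)) x := by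
  rw [pdx_eq hu]; exact hasDerivAt_x hu (x, y)

lemma hasDy {u : ℝ × ℝ → ℝ} (hu : ContDiff ℝ ∞ u) (x y : ℝ) :
    HasDerivAt (fun t => u (x, t)) (pdy u (x, y)) y := by
  rw [pdy_eq hu]; exact hasDerivAt_y hu (x, y)

lemma contDiff_pdx {u : ℝ × ℝ → ℝ} (hu : ContDiff ℝ ∞ u) : ContDiff ℝ ∞ (pdx u) := by
  rw [pdx_eq hu]
  exact (hu.fderiv_right (m := ∞) (by simp)).clm_apply contDiff_const

lemma contDiff_pdy {u : ℝ × ℝ → ℝ} (hu : ContDiff ℝ ∞ u) : ContDiff ℝ ∞ (pdy u) := by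
  rw [pdy_eq hu]
  exact (hu.fderiv_right (m := ∞) (by simp)).clm_apply contDiff_const

lemma pd_symm {u : ℝ × ℝ → ℝ} (hu : ContDiff ℝ ∞ u) (p : ℝ × ℝ) :
    pdx (pdy u) p = pdy (pdx u) p := by
  rw [pdx_eq (contDiff_pdy hu), pdy_eq (contDiff_pdx hu), pdx_eq hu, pdy_eq hu]
  have hd : DifferentiableAt ℝ (fderiv ℝ u) p :=
    (hu.fderiv_right (m := ∞) (by simp)).differentiable (by simp) p
  have hs : IsSymmSndFDerivAt ℝ u p := by
    apply ContDiffAt.isSymmSndFDerivAt hu.contDiffAt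
    simp only [minSmoothness_of_isRCLikeNormedField]
    exact WithTop.coe_le_coe.2 (le_top : (2 : ℕ∞) ≤ ⊤)
  simp only []
  rw [fderiv_clm_apply hd (by fun_prop), fderiv_clm_apply hd (by fun_prop)]
  simp
  exact hs _ _

/-- chain rule along a curve -/
lemma hasDerivAt_curve {u : ℝ × ℝ → ℝ} (hu : ContDiff ℝ ∞ u) {a b : ℝ → ℝ} {a' b' t : ℝ}
    (ha : HasDerivAt a a' t) (hb : HasDerivAt b b' t) :
    HasDerivAt (fun t => u (a t, b t))
      (a' * pdx u (a t, b t) + b' * pdy u (a t, b t)) t := by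
  have h1 : HasFDerivAt u (fderiv ℝ u (a t, b t)) (a t, b t) :=
    (hu.differentiable (by simp) _).hasFDerivAt
  have h := h1.comp_hasDerivAt t (ha.prodMk hb)
  refine h.congr_deriv ?_
  rw [pdx_eq hu, pdy_eq hu]
  have : ((a', b') : ℝ × ℝ) = a' • ((1 : ℝ), (0 : ℝ)) + b' • ((0 : ℝ), (1 : ℝ)) := by simp
  rw [this, map_add, map_smul, map_smul]; simp

/-- right half disc -/
def HD (β : ℝ) : Set (ℝ × ℝ) := {p | p.1 ^ 2 + p.2 ^ 2 ≤ β ^ 2 ∧ 0 ≤ p.1}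

lemma isClosed_HD (β : ℝ) : IsClosed (HD β) := by
  have h1 : IsClosed {p : ℝ × ℝ | p.1 ^ 2 + p.2 ^ 2 ≤ β ^ 2} :=
    isClosed_le (by fun_prop) (by fun_prop)
  have h2 : IsClosed {p : ℝ × ℝ | 0 ≤ p.1} := isClosed_le (by fun_prop) (by fun_prop)
  exact h1.inter h2

lemma isCompact_HD {β : ℝ} (hβ : 0 < β) : IsCompact (HD β) := by
  apply ((isCompact_Icc (a := -β) (b := β)).prod (isCompact_Icc (a := -β) (b := β))).of_isClosed_subset
    (isClosed_HD β)
  rintro ⟨x, y⟩ ⟨h1, h2⟩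
  simp only at h1 h2
  have hx := abs_le.1 (abs_le_of_sq_le_sq (show x ^ 2 ≤ β ^ 2 by nlinarith [sq_nonneg y]) hβ.le)
  have hy := abs_le.1 (abs_le_of_sq_le_sq (show y ^ 2 ≤ β ^ 2 by nlinarith [sq_nonneg x]) hβ.le)
  exact ⟨hx, hy⟩

lemma integral_HD {β : ℝ} (hβ : 0 < β) {h : ℝ × ℝ → ℝ} (hc : Continuous h) :
    ∫ p in HD β, h p =
      ∫ r in (0 : ℝ)..β, ∫ θ in (-(π / 2))..(π / 2), r * h (r * cos θ, r * sin θ) := by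
  have hpi := Real.pi_pos
  rw [← integral_indicator (isClosed_HD β).measurableSet, ← integral_comp_polarCoord_symm]
  have hsub : Ioc 0 β ×ˢ Icc (-(π / 2)) (π / 2) ⊆ polarCoord.target := by
    rintro ⟨r, θ⟩ ⟨⟨h1, h2⟩, h3, h4⟩
    simp only [polarCoord_target] at *
    exact ⟨h1, by linarith, by linarith⟩
  have hmem : ∀ p ∈ polarCoord.target, (polarCoord.symm p ∈ HD β ↔
      p ∈ Ioc 0 β ×ˢ Icc (-(π / 2)) (π / 2)) := by
    rintro ⟨r, θ⟩ hp
    simp only [polarCoord_target, mem_prod, mem_Ioi, mem_Ioo] at hp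
    obtain ⟨h1, h2, h3⟩ := hp
    simp only [polarCoord_symm_apply, HD, mem_ofPred_eq, mem_prod, mem_Ioc, mem_Icc]
    have e : (r * cos θ) ^ 2 + (r * sin θ) ^ 2 = r ^ 2 := by
      nlinarith [sin_sq_add_cos_sq θ]
    rw [e, sq_le_sq₀ h1.le hβ.le, mul_nonneg_iff_of_pos_left h1]
    constructor
    · rintro ⟨h4, h5⟩
      refine ⟨⟨h1, h4⟩, ?_, ?_⟩
      · by_contra hh
        push Not at hh
        have : cos (-θ) < 0 := cos_neg_of_pi_div_two_lt_of_lt (by linarith) (by linarith)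
        rw [cos_neg] at this; linarith
      · by_contra hh
        push Not at hh
        have : cos θ < 0 := cos_neg_of_pi_div_two_lt_of_lt (by linarith) (by linarith)
        linarith
    · rintro ⟨⟨_, h4⟩, h5, h6⟩
      exact ⟨h4, cos_nonneg_of_neg_pi_div_two_le_of_le h5 h6⟩
  have hm : MeasurableSet (Ioc 0 β ×ˢ Icc (-(π / 2)) (π / 2)) :=
    measurableSet_Ioc.prod measurableSet_Icc
  have e1 : ∫ p in polarCoord.target, p.1 • (HD β).indicator h (polarCoord.symm p) =
      ∫ p in polarCoord.target, (Ioc 0 β ×ˢ Icc (-(π / 2)) (π / 2)).indicator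
        (fun p : ℝ × ℝ => p.1 * h (p.1 * cos p.2, p.1 * sin p.2)) p := by
    apply setIntegral_congr_fun polarCoord.open_target.measurableSet
    intro p hp
    have := hmem p hp
    by_cases hq : p ∈ Ioc 0 β ×ˢ Icc (-(π / 2)) (π / 2)
    · simp only [indicator_of_mem hq, indicator_of_mem (this.2 hq)]
      simp [polarCoord_symm_apply]
    · simp only [indicator_of_notMem hq, indicator_of_notMem (mt this.1 hq)]
      simp
  rw [e1, setIntegral_indicator hm, inter_eq_self_of_subset_right hsub]
  rw [Measure.volume_eq_prod, setIntegral_prod]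
  · rw [intervalIntegral.integral_of_le hβ.le]
    congr 1
    ext r
    rw [intervalIntegral.integral_of_le (by linarith), integral_Icc_eq_integral_Ioc]
  · rw [← Measure.volume_eq_prod]
    have hcc : Continuous (fun p : ℝ × ℝ => p.1 * h (p.1 * cos p.2, p.1 * sin p.2)) := by fun_prop
    exact (hcc.continuousOn.integrableOn_compact (isCompact_Icc.prod isCompact_Icc)).mono_set
      (prod_mono Ioc_subset_Icc_self Subset.rfl)

lemma div_HD {β : ℝ} (hβ : 0 < β) {P Q : ℝ × ℝ → ℝ} (hP : ContDiff ℝ ∞ P) (hQ : ContDiff ℝ ∞ Q)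
    (h0 : ∀ y, P (0, y) = 0) :
    ∫ p in HD β, (pdx P p + pdy Q p) =
      β * ∫ θ in (-(π / 2))..(π / 2),
        (cos θ * P (β * cos θ, β * sin θ) + sin θ * Q (β * cos θ, β * sin θ)) := by
  have cPx := (contDiff_pdx hP).continuous
  have cPy := (contDiff_pdy hP).continuous
  have cQx := (contDiff_pdx hQ).continuous
  have cQy := (contDiff_pdy hQ).continuous
  rw [integral_HD hβ (by fun_prop)]
  set f : ℝ × ℝ → ℝ := fun q => q.1 * (cos q.2 * P (q.1 * cos q.2, q.1 * sin q.2) +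
    sin q.2 * Q (q.1 * cos q.2, q.1 * sin q.2)) with hf
  set g : ℝ × ℝ → ℝ := fun q => -sin q.2 * P (q.1 * cos q.2, q.1 * sin q.2) +
    cos q.2 * Q (q.1 * cos q.2, q.1 * sin q.2) with hg
  have sf : ContDiff ℝ ∞ f := by
    have := Real.contDiff_cos (n := ∞); have := Real.contDiff_sin (n := ∞)
    fun_prop
  have sg : ContDiff ℝ ∞ g := by
    have := Real.contDiff_cos (n := ∞); have := Real.contDiff_sin (n := ∞)
    fun_prop
  have key : ∀ r θ : ℝ, fderiv ℝ f (r, θ) (1, 0) + fderiv ℝ g (r, θ) (0, 1) =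
      r * (pdx P (r * cos θ, r * sin θ) + pdy Q (r * cos θ, r * sin θ)) := by
    intro r θ
    have a1 : HasDerivAt (fun t => t * cos θ) (cos θ) r := by
      simpa using (hasDerivAt_id r).mul_const (cos θ)
    have a2 : HasDerivAt (fun t => t * sin θ) (sin θ) r := by
      simpa using (hasDerivAt_id r).mul_const (sin θ)
    have b1 : HasDerivAt (fun t => r * cos t) (r * -sin θ) θ := (hasDerivAt_cos θ).const_mul r
    have b2 : HasDerivAt (fun t => r * sin t) (r * cos θ) θ := (hasDerivAt_sin θ).const_mul r
    have d1 := (hasDerivAt_id r).mul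
      (((hasDerivAt_curve hP a1 a2).const_mul (cos θ)).add
        ((hasDerivAt_curve hQ a1 a2).const_mul (sin θ)))
    have d2 := ((hasDerivAt_sin θ).neg.mul (hasDerivAt_curve hP b1 b2)).add
        ((hasDerivAt_cos θ).mul (hasDerivAt_curve hQ b1 b2))
    have e1 := (hasDerivAt_x sf (r, θ)).unique d1
    have e2 := (hasDerivAt_y sg (r, θ)).unique d2
    rw [e1, e2]
    have := sin_sq_add_cos_sq θ
    simp
    linear_combination r * (pdx P (r * cos θ, r * sin θ) + pdy Q (r * cos θ, r * sin θ)) * this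
  have D := integral2_divergence_prod_of_hasFDerivAt f g (fderiv ℝ f) (fderiv ℝ g)
    0 (-(π/2)) β (π/2) sf.continuous.continuousOn sg.continuous.continuousOn
    (fun x _ => (sf.differentiable (by simp) x).hasFDerivAt)
    (fun x _ => (sg.differentiable (by simp) x).hasFDerivAt)
    (by
      apply ContinuousOn.integrableOn_compact (isCompact_uIcc.prod isCompact_uIcc)
      have e1 := (contDiff_pdx sf).continuous
      have e2 := (contDiff_pdy sg).continuous
      rw [pdx_eq sf] at e1
      rw [pdy_eq sg] at e2
      exact (e1.add e2).continuousOn)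
  simp only [key] at D
  rw [D]
  simp [hf, hg, h0]

set_option maxHeartbeats 1000000 in
lemma pointwise {β K K1 ε x c c' v vx vy g L C : ℝ} (hβ : 0 < β) (hK : 0 < K) (hε : 0 < ε)
    (hL : 1 ≤ L) (hK1 : K1 = K * (1 + β)) (hC : C = K1 ^ 2 / ε + 3 * K1 * β + K * β ^ 2)
    (hx : 0 ≤ x) (hxβ : x ≤ β) (hc : |c| ≤ K) (hc' : |c'| ≤ K) :
    2 * L ^ 2 * (2 * x * c * vx * vy + x ^ 2 * c' * (vy ^ 2 - vx ^ 2 + L ^ 2 * v ^ 2) / 2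
      - x ^ 2 * c * vy * g
      - K1 * (x * (vx ^ 2 + vy ^ 2) + v * vx - x * v * (g + L ^ 2 * v))) ≤
    C * L ^ 4 * v ^ 2 + ε * vx ^ 2 + C * L ^ 2 * g ^ 2 := by
  have hK1p : 0 < K1 := by rw [hK1]; positivity
  have t1 : 2 * x * c * vx * vy ≤ K * x * (vx ^ 2 + vy ^ 2) := by
    have : c * (2 * vx * vy) ≤ K * (vx ^ 2 + vy ^ 2) := by
      have h1 : c * (2 * vx * vy) ≤ |c| * |2 * vx * vy| := by rw [← abs_mul]; exact le_abs_self _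
      have h2 : |2 * vx * vy| ≤ vx ^ 2 + vy ^ 2 := by
        rw [abs_le]; constructor <;> nlinarith [sq_nonneg (vx + vy), sq_nonneg (vx - vy)]
      exact h1.trans (mul_le_mul hc h2 (abs_nonneg _) hK.le)
    nlinarith [mul_le_mul_of_nonneg_left this hx]
  have hxx : x ^ 2 ≤ β * x := by nlinarith
  have hxx2 : x ^ 2 ≤ β ^ 2 := by nlinarith
  have t2 : x ^ 2 * c' * (vy ^ 2 - vx ^ 2 + L ^ 2 * v ^ 2) / 2 ≤
      K * β * x * (vx ^ 2 + vy ^ 2) / 2 + K * β ^ 2 * L ^ 2 * v ^ 2 / 2 := by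
    have a1 : c' * (vy ^ 2 - vx ^ 2) ≤ K * (vx ^ 2 + vy ^ 2) := by
      have h1 : c' * (vy ^ 2 - vx ^ 2) ≤ |c'| * |vy ^ 2 - vx ^ 2| := by
        rw [← abs_mul]; exact le_abs_self _
      have h2 : |vy ^ 2 - vx ^ 2| ≤ vx ^ 2 + vy ^ 2 := by
        rw [abs_le]; constructor <;> nlinarith [sq_nonneg vx, sq_nonneg vy]
      exact h1.trans (mul_le_mul hc' h2 (abs_nonneg _) hK.le)
    have a2 : c' * (L ^ 2 * v ^ 2) ≤ K * (L ^ 2 * v ^ 2) :=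
      mul_le_mul_of_nonneg_right ((le_abs_self _).trans hc') (by positivity)
    have b1 := mul_le_mul_of_nonneg_left a1 (sq_nonneg x)
    have b2 := mul_le_mul_of_nonneg_left a2 (sq_nonneg x)
    have b3 := mul_le_mul_of_nonneg_right hxx (show 0 ≤ K * (vx ^ 2 + vy ^ 2) by positivity)
    have b4 := mul_le_mul_of_nonneg_right hxx2 (show 0 ≤ K * (L ^ 2 * v ^ 2) by positivity)
    linarith
  have t3 : -(x ^ 2 * c * vy * g) ≤ K * β * x * (vx ^ 2 + vy ^ 2) / 2 + K * β ^ 2 * g ^ 2 / 2 := by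
    have a1 : (-c) * (vy * g) ≤ K * ((vy ^ 2 + g ^ 2) / 2) := by
      have h1 : (-c) * (vy * g) ≤ |c| * |vy * g| := by
        rw [← abs_neg c, ← abs_mul]; exact le_abs_self _
      have h2 : |vy * g| ≤ (vy ^ 2 + g ^ 2) / 2 := by
        rw [abs_le]; constructor <;> nlinarith [sq_nonneg (vy + g), sq_nonneg (vy - g)]
      exact h1.trans (mul_le_mul hc h2 (abs_nonneg _) hK.le)
    have b1 := mul_le_mul_of_nonneg_left a1 (sq_nonneg x)
    have b3 := mul_le_mul_of_nonneg_right hxx (show 0 ≤ K * vy ^ 2 by positivity)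
    have b4 := mul_le_mul_of_nonneg_right hxx2 (show 0 ≤ K * g ^ 2 by positivity)
    have b5 : 0 ≤ K * β * x * vx ^ 2 := by positivity
    linarith
  have t4 : x * v * g ≤ β * (v ^ 2 + g ^ 2) / 2 := by
    have h2 : v * g ≤ (v ^ 2 + g ^ 2) / 2 := by nlinarith [sq_nonneg (v - g)]
    have b1 := mul_le_mul_of_nonneg_left h2 hx
    have b3 := mul_le_mul_of_nonneg_right hxβ (show 0 ≤ (v ^ 2 + g ^ 2) / 2 by positivity)
    linarith
  have t5 : x * v * (L ^ 2 * v) ≤ β * L ^ 2 * v ^ 2 := by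
    have b3 := mul_le_mul_of_nonneg_right hxβ (show 0 ≤ L ^ 2 * v ^ 2 by positivity)
    linarith
  have t6 : -(2 * L ^ 2 * K1 * (v * vx)) ≤ ε * vx ^ 2 + K1 ^ 2 / ε * L ^ 4 * v ^ 2 := by
    have : 0 ≤ ε * (vx + K1 / ε * L ^ 2 * v) ^ 2 := by positivity
    have e : ε * (vx + K1 / ε * L ^ 2 * v) ^ 2 =
      ε * vx ^ 2 + 2 * L ^ 2 * K1 * (v * vx) + K1 ^ 2 / ε * L ^ 4 * v ^ 2 := by
      field_simp
      ring
    linarith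
  have hsum : 2 * x * c * vx * vy + x ^ 2 * c' * (vy ^ 2 - vx ^ 2 + L ^ 2 * v ^ 2) / 2
      - x ^ 2 * c * vy * g - K1 * (x * (vx ^ 2 + vy ^ 2))
      + K1 * (x * v * g) + K1 * (x * v * (L ^ 2 * v)) ≤
      K * β ^ 2 * L ^ 2 * v ^ 2 / 2 + K * β ^ 2 * g ^ 2 / 2 +
      K1 * (β * (v ^ 2 + g ^ 2) / 2) + K1 * (β * L ^ 2 * v ^ 2) := by
    have b4 := mul_le_mul_of_nonneg_left t4 hK1p.le
    have b5 := mul_le_mul_of_nonneg_left t5 hK1p.le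
    have e : K1 * (x * (vx ^ 2 + vy ^ 2)) = K * x * (vx ^ 2 + vy ^ 2) +
      K * β * x * (vx ^ 2 + vy ^ 2) := by rw [hK1]; ring
    linarith
  have h2 := mul_le_mul_of_nonneg_left hsum (show 0 ≤ 2 * L ^ 2 by positivity)
  have h3 : L ^ 2 * (K1 * β * v ^ 2) ≤ L ^ 4 * (K1 * β * v ^ 2) := by
    exact mul_le_mul_of_nonneg_right (pow_le_pow_right₀ hL (by norm_num)) (by positivity)
  have h4 : 0 ≤ K1 ^ 2 / ε * L ^ 2 * g ^ 2 := by positivity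
  have h5 : 0 ≤ K1 * β * L ^ 2 * g ^ 2 := by positivity
  rw [hC]
  linarith

lemma half {β : ℝ} (hβ : 0 < β) {χ : ℝ → ℝ} (hχ : ContDiff ℝ ∞ χ) {ε : ℝ} (hε : 0 < ε) :
    ∃ C > 0, ∀ v : ℝ × ℝ → ℝ, ContDiff ℝ ∞ v →
      (∀ θ ∈ Icc (-(π / 2)) (π / 2), v (β * cos θ, β * sin θ) = 0) → ∀ L : ℝ, 1 ≤ L →
      L ^ 2 * (β * ∫ θ in (-(π / 2))..(π / 2), (β * cos θ) ^ 2 * χ (β * sin θ) *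
        pdy v (β * cos θ, β * sin θ) * (cos θ * pdx v (β * cos θ, β * sin θ) +
          sin θ * pdy v (β * cos θ, β * sin θ))) ≤
      C * L ^ 4 * (∫ p in HD β, (v p) ^ 2) + ε * (∫ p in HD β, (pdx v p) ^ 2) +
      C * L ^ 2 * (∫ p in HD β, (lap v p - L ^ 2 * v p) ^ 2) := by
  have hdχ : ContDiff ℝ ∞ (deriv χ) := by
    exact ((contDiff_infty_iff_deriv (𝕜 := ℝ)).1 hχ).2
  obtain ⟨K₀, hK₀⟩ := (isCompact_Icc (a := -β) (b := β)).exists_bound_of_continuousOn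
    hχ.continuous.continuousOn
  obtain ⟨K₂, hK₂⟩ := (isCompact_Icc (a := -β) (b := β)).exists_bound_of_continuousOn
    hdχ.continuous.continuousOn
  set K := max 1 (max K₀ K₂) with hKdef
  have hK : 0 < K := lt_of_lt_of_le one_pos (le_max_left _ _)
  have hKa : ∀ y ∈ Icc (-β) β, |χ y| ≤ K := fun y hy =>
    (hK₀ y hy).trans ((le_max_left _ _).trans (le_max_right _ _))
  have hKb : ∀ y ∈ Icc (-β) β, |deriv χ y| ≤ K := fun y hy =>
    (hK₂ y hy).trans ((le_max_right _ _).trans (le_max_right _ _))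
  set K1 := K * (1 + β) with hK1
  set C := K1 ^ 2 / ε + 3 * K1 * β + K * β ^ 2 with hC
  refine ⟨C, by positivity, ?_⟩
  intro v hv hv0 L hL
  have hvx := contDiff_pdx hv
  have hvy := contDiff_pdy hv
  have hvxx := contDiff_pdx hvx
  have hvyy := contDiff_pdy hvy
  have hvxy := contDiff_pdy hvx
  set P : ℝ × ℝ → ℝ := fun p => p.1 ^ 2 * χ p.2 * pdx v p * pdy v p -
    K1 * (p.1 * v p * pdx v p) with hPd
  set Q : ℝ × ℝ → ℝ := fun p => p.1 ^ 2 * χ p.2 * (pdy v p ^ 2 - pdx v p ^ 2 +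
    L ^ 2 * v p ^ 2) / 2 - K1 * (p.1 * v p * pdy v p) with hQd
  have hχ2 : ContDiff ℝ ∞ (fun p : ℝ × ℝ => χ p.2) := hχ.comp contDiff_snd
  have hP : ContDiff ℝ ∞ P := by fun_prop
  have hQ : ContDiff ℝ ∞ Q := by fun_prop
  have D := div_HD hβ hP hQ (by intro y; simp [hPd])
  -- boundary
  have hB : ∫ θ in (-(π / 2))..(π / 2), (β * cos θ) ^ 2 * χ (β * sin θ) *
        pdy v (β * cos θ, β * sin θ) * (cos θ * pdx v (β * cos θ, β * sin θ) +
          sin θ * pdy v (β * cos θ, β * sin θ)) =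
      2 * ∫ θ in (-(π / 2))..(π / 2),
        (cos θ * P (β * cos θ, β * sin θ) + sin θ * Q (β * cos θ, β * sin θ)) := by
    rw [← intervalIntegral.integral_const_mul]
    apply intervalIntegral.integral_congr
    intro θ hθ
    rw [uIcc_of_le (by linarith [Real.pi_pos])] at hθ
    have z := hv0 θ hθ
    simp only [hPd, hQd, z]
    have tan : cos θ * (cos θ * pdy v (β * cos θ, β * sin θ) -
        sin θ * pdx v (β * cos θ, β * sin θ)) = 0 := by
      by_cases h : θ ∈ Ioo (-(π / 2)) (π / 2)
      · have b1 : HasDerivAt (fun t => β * cos t) (β * -sin θ) θ := (hasDerivAt_cos θ).const_mul β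
        have b2 : HasDerivAt (fun t => β * sin t) (β * cos θ) θ := (hasDerivAt_sin θ).const_mul β
        have d := hasDerivAt_curve hv b1 b2
        have d0 : HasDerivAt (fun t => v (β * cos t, β * sin t)) 0 θ := by
          apply (hasDerivAt_const θ (0 : ℝ)).congr_of_eventuallyEq
          filter_upwards [isOpen_Ioo.mem_nhds h] with t ht
          exact hv0 t ⟨ht.1.le, ht.2.le⟩
        have e := d.unique d0
        have : β * (cos θ * pdy v (β * cos θ, β * sin θ) -
          sin θ * pdx v (β * cos θ, β * sin θ)) = 0 := by linarith
        rcases mul_eq_zero.1 this with h | h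
        · exact absurd h hβ.ne'
        · rw [h, mul_zero]
      · have : cos θ = 0 := by
          have : θ = -(π / 2) ∨ θ = π / 2 := by
            by_contra hh
            push Not at hh
            exact h ⟨lt_of_le_of_ne hθ.1 hh.1.symm, lt_of_le_of_ne hθ.2 hh.2⟩
          rcases this with h | h <;> simp [h]
        rw [this, zero_mul]
    linear_combination (-(β ^ 2 * cos θ * χ (β * sin θ) * pdx v (β * cos θ, β * sin θ))) * tan
  have hdiv : ∀ p, pdx P p + pdy Q p = 2 * p.1 * χ p.2 * pdx v p * pdy v p +
      p.1 ^ 2 * deriv χ p.2 * (pdy v p ^ 2 - pdx v p ^ 2 + L ^ 2 * v p ^ 2) / 2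
      - p.1 ^ 2 * χ p.2 * pdy v p * (lap v p - L ^ 2 * v p)
      - K1 * (p.1 * (pdx v p ^ 2 + pdy v p ^ 2) + v p * pdx v p
        - p.1 * v p * ((lap v p - L ^ 2 * v p) + L ^ 2 * v p)) := by
    rintro ⟨x, y⟩
    have dx := hasDerivAt_id x
    have d1 := (((((dx.pow 2).mul_const (χ y)).mul (hasDx hvx x y)).mul (hasDx hvy x y)).sub
      (((dx.mul (hasDx hv x y)).mul (hasDx hvx x y)).const_mul K1))
    have dχ : HasDerivAt χ (deriv χ y) y := (hχ.differentiable (by simp) y).hasDerivAt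
    have d2 := (((dχ.const_mul (x ^ 2)).mul
      ((((hasDy hvy x y).pow 2).sub ((hasDy hvx x y).pow 2)).add
        (((hasDy hv x y).pow 2).const_mul (L ^ 2)))).div_const 2).sub
      ((((hasDy hv x y).const_mul x).mul (hasDy hvy x y)).const_mul K1)
    have e1 := (hasDx hP x y).unique d1
    have e2 := (hasDy hQ x y).unique d2
    rw [e1, e2]
    simp [lap, pd_symm hv]
    ring
  have cl : Continuous (lap v) := by
    unfold lap
    exact (hvxx.continuous.neg).sub hvyy.continuous
  have cv := hv.continuous
  have cvx := hvx.continuous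
  have int : ∀ h : ℝ × ℝ → ℝ, Continuous h → IntegrableOn h (HD β) := fun h hh =>
    hh.continuousOn.integrableOn_compact (isCompact_HD hβ)
  rw [hB]
  have e : L ^ 2 * (β * (2 * ∫ θ in (-(π / 2))..(π / 2),
        (cos θ * P (β * cos θ, β * sin θ) + sin θ * Q (β * cos θ, β * sin θ)))) =
      ∫ p in HD β, 2 * L ^ 2 * (pdx P p + pdy Q p) := by
    rw [integral_const_mul, D]; ring
  rw [e, ← integral_const_mul, ← integral_const_mul, ← integral_const_mul,
    ← integral_add, ← integral_add]
  · apply setIntegral_mono_on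
    · exact int _ (by
        have := (contDiff_pdx hP).continuous
        have := (contDiff_pdy hQ).continuous
        fun_prop)
    · exact int _ (by fun_prop)
    · exact (isClosed_HD β).measurableSet
    · rintro ⟨x, y⟩ ⟨h1, h2⟩
      simp only at h1 h2
      have hx := abs_le.1 (abs_le_of_sq_le_sq (show x ^ 2 ≤ β ^ 2 by nlinarith [sq_nonneg y]) hβ.le)
      have hy := abs_le.1 (abs_le_of_sq_le_sq (show y ^ 2 ≤ β ^ 2 by nlinarith [sq_nonneg x]) hβ.le)
      rw [hdiv]
      exact pointwise hβ hK hε hL hK1 hC h2 hx.2 (hKa y hy) (hKb y hy)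
  · exact int _ (by fun_prop)
  · exact int _ (by fun_prop)
  · exact int _ (by fun_prop)
  · exact int _ (by fun_prop)

lemma continuous_lap {u : ℝ × ℝ → ℝ} (hu : ContDiff ℝ ∞ u) : Continuous (lap u) := by
  unfold lap
  exact ((contDiff_pdx (contDiff_pdx hu)).continuous.neg).sub
    (contDiff_pdy (contDiff_pdy hu)).continuous

lemma eqOn_pdx {u v : ℝ × ℝ → ℝ} {U : Set (ℝ × ℝ)} (hU : IsOpen U) (h : EqOn u v U) :
    EqOn (pdx u) (pdx v) U := by
  intro p hp
  apply EventuallyEq.deriv_eq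
  have hc : ContinuousAt (fun t : ℝ => (t, p.2)) p.1 := by fun_prop
  filter_upwards [hc (hU.mem_nhds hp)] with t ht
  exact h ht

lemma eqOn_pdy {u v : ℝ × ℝ → ℝ} {U : Set (ℝ × ℝ)} (hU : IsOpen U) (h : EqOn u v U) :
    EqOn (pdy u) (pdy v) U := by
  intro p hp
  apply EventuallyEq.deriv_eq
  have hc : ContinuousAt (fun t : ℝ => (p.1, t)) p.2 := by fun_prop
  filter_upwards [hc (hU.mem_nhds hp)] with t ht
  exact h ht

lemma extend {S V : Set (ℝ × ℝ)} (hS : IsClosed S) (hV : IsOpen V) (hSV : S ⊆ V)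
    {u : ℝ × ℝ → ℝ} (hu : ContDiffOn ℝ ∞ u V) :
    ∃ (v : ℝ × ℝ → ℝ) (U : Set (ℝ × ℝ)), IsOpen U ∧ S ⊆ U ∧ ContDiff ℝ ∞ v ∧ EqOn u v U := by
  obtain ⟨ρ, h0, h1, -⟩ := exists_contMDiffMap_zero_one_nhds_of_isClosed (n := (⊤ : ℕ∞))
    𝓘(ℝ, ℝ × ℝ) hV.isClosed_compl hS (by
      rw [Set.disjoint_left]; intro x hx hx2; exact hx (hSV hx2))
  obtain ⟨U, hU, hSU, hU1⟩ := mem_nhdsSet_iff_exists.1 h1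
  have hρ : ContDiff ℝ ∞ ρ := ρ.contMDiff.contDiff
  refine ⟨fun p => ρ p * u p, U, hU, hSU, ?_, ?_⟩
  · rw [contDiff_iff_contDiffAt]
    intro p
    by_cases hp : p ∈ V
    · exact hρ.contDiffAt.mul (hu.contDiffAt (hV.mem_nhds hp))
    · have : ∀ᶠ x in 𝓝 p, ρ x = 0 := (eventually_nhdsSet_iff_forall.1 h0) p hp
      apply (contDiffAt_const (c := (0 : ℝ))).congr_of_eventuallyEq
      filter_upwards [this] with x hx
      simp [hx]
  · intro p hp
    have : ρ p = 1 := hU1 hp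
    simp [this]

/-- one wing -/
def Wg (α β s : ℝ) : Set (ℝ × ℝ) := {p | (s * p.1 - α) ^ 2 + p.2 ^ 2 ≤ β ^ 2 ∧ α ≤ s * p.1}

lemma isClosed_Wg (α β s : ℝ) : IsClosed (Wg α β s) := by
  have h1 : IsClosed {p : ℝ × ℝ | (s * p.1 - α) ^ 2 + p.2 ^ 2 ≤ β ^ 2} :=
    isClosed_le (by fun_prop) (by fun_prop)
  have h2 : IsClosed {p : ℝ × ℝ | α ≤ s * p.1} := isClosed_le (by fun_prop) (by fun_prop)
  exact h1.inter h2

lemma Wings_eq (α β : ℝ) : Wings α β = Wg α β 1 ∪ Wg α β (-1) := by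
  ext ⟨x, y⟩
  simp only [Wings, Wg, mem_union, mem_ofPred_eq]
  have e1 : (-1 * x - α) ^ 2 = (x + α) ^ 2 := by ring
  have e2 : α ≤ -1 * x ↔ x ≤ -α := by constructor <;> intro h <;> linarith
  rw [e1, e2, one_mul]

lemma isClosed_Stadium (α β : ℝ) : IsClosed (Stadium α β) := by
  unfold Stadium
  rw [Wings_eq]
  exact (isClosed_Icc.prod isClosed_Icc).union ((isClosed_Wg α β 1).union (isClosed_Wg α β (-1)))

lemma isCompact_Stadium {α β : ℝ} (hα : 0 < α) (hβ : 0 < β) : IsCompact (Stadium α β) := by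
  apply ((isCompact_Icc (a := -(α + β)) (b := α + β)).prod
    (isCompact_Icc (a := -β) (b := β))).of_isClosed_subset (isClosed_Stadium α β)
  rintro ⟨x, y⟩ (⟨hx, hy⟩ | ⟨h1, h2⟩ | ⟨h1, h2⟩)
  · exact ⟨⟨by linarith [hx.1], by linarith [hx.2]⟩, hy⟩
  · simp only at h1 h2
    have hx := abs_le.1 (abs_le_of_sq_le_sq (show (x - α) ^ 2 ≤ β ^ 2 by nlinarith [sq_nonneg y]) hβ.le)
    have hy := abs_le.1 (abs_le_of_sq_le_sq (show y ^ 2 ≤ β ^ 2 by nlinarith [sq_nonneg (x - α)]) hβ.le)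
    exact ⟨⟨by linarith, by linarith⟩, hy⟩
  · simp only at h1 h2
    have hx := abs_le.1 (abs_le_of_sq_le_sq (show (x + α) ^ 2 ≤ β ^ 2 by nlinarith [sq_nonneg y]) hβ.le)
    have hy := abs_le.1 (abs_le_of_sq_le_sq (show y ^ 2 ≤ β ^ 2 by nlinarith [sq_nonneg (x + α)]) hβ.le)
    exact ⟨⟨by linarith, by linarith⟩, hy⟩

/-- boundary term of one wing -/
def BW (α β s : ℝ) (χ : ℝ → ℝ) (u : ℝ × ℝ → ℝ) : ℝ :=
  β * ∫ θ in (-(π / 2))..(π / 2), (β * cos θ) ^ 2 * χ (β * sin θ) *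
    pdy u (s * (α + β * cos θ), β * sin θ) *
    (cos θ * (s * pdx u (s * (α + β * cos θ), β * sin θ)) +
      sin θ * pdy u (s * (α + β * cos θ), β * sin θ))

lemma integral_Wg {α β s : ℝ} (hs : s = 1 ∨ s = -1) (h : ℝ × ℝ → ℝ) :
    ∫ p in HD β, h (s * (α + p.1), p.2) = ∫ p in Wg α β s, h p := by
  have hmp1 : MeasurePreserving (fun x : ℝ => s * (α + x)) volume volume := by
    rcases hs with rfl | rfl
    · simpa using measurePreserving_add_left (volume : Measure ℝ) α
    · have := Measure.measurePreserving_sub_left (volume : Measure ℝ) (-α)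
      convert this using 2
      ring
  have hmp : MeasurePreserving (fun p : ℝ × ℝ => (s * (α + p.1), p.2)) volume volume := by
    have := hmp1.prod (MeasurePreserving.id (volume : Measure ℝ))
    exact this
  have hss : s * s = 1 := by rcases hs with h | h <;> simp [h]
  have hs0 : s ≠ 0 := by rcases hs with h | h <;> simp [h]
  have hemb : MeasurableEmbedding (fun p : ℝ × ℝ => (s * (α + p.1), p.2)) := by
    apply Continuous.measurableEmbedding (by fun_prop)
    rintro ⟨a, b⟩ ⟨c, d⟩ hh
    simp only [Prod.mk.injEq] at hh
    have := mul_left_cancel₀ hs0 hh.1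
    ext
    · simp; linarith
    · exact hh.2
  rw [← hmp.setIntegral_preimage_emb hemb h]
  congr 2
  ext ⟨x, y⟩
  have e : s * (s * (α + x)) = α + x := by rw [← mul_assoc, hss, one_mul]
  simp only [HD, Wg, mem_preimage, mem_ofPred_eq, e]
  constructor
  · rintro ⟨h1, h2⟩; exact ⟨by nlinarith, by linarith⟩
  · rintro ⟨h1, h2⟩; exact ⟨by nlinarith, by linarith⟩

lemma pdx_T {u : ℝ × ℝ → ℝ} (hu : ContDiff ℝ ∞ u) (α s : ℝ) :
    pdx (fun p => u (s * (α + p.1), p.2)) = fun p => s * pdx u (s * (α + p.1), p.2) := by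
  funext ⟨x, y⟩
  have h1 : HasDerivAt (fun t => s * (α + t)) s x := by
    simpa using ((hasDerivAt_id x).const_add α).const_mul s
  have := (hasDerivAt_curve hu h1 (hasDerivAt_const x y)).deriv
  simp only [zero_mul, add_zero] at this
  exact this

lemma pdy_T (u : ℝ × ℝ → ℝ) (α s : ℝ) :
    pdy (fun p => u (s * (α + p.1), p.2)) = fun p => pdy u (s * (α + p.1), p.2) := by
  funext ⟨x, y⟩
  rfl

lemma wing {α β ε C : ℝ} {χ : ℝ → ℝ} (hC : C > 0)
    (H : ∀ v : ℝ × ℝ → ℝ, ContDiff ℝ ∞ v →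
      (∀ θ ∈ Icc (-(π / 2)) (π / 2), v (β * cos θ, β * sin θ) = 0) → ∀ L : ℝ, 1 ≤ L →
      L ^ 2 * (β * ∫ θ in (-(π / 2))..(π / 2), (β * cos θ) ^ 2 * χ (β * sin θ) *
        pdy v (β * cos θ, β * sin θ) * (cos θ * pdx v (β * cos θ, β * sin θ) +
          sin θ * pdy v (β * cos θ, β * sin θ))) ≤
      C * L ^ 4 * (∫ p in HD β, (v p) ^ 2) + ε * (∫ p in HD β, (pdx v p) ^ 2) +
      C * L ^ 2 * (∫ p in HD β, (lap v p - L ^ 2 * v p) ^ 2))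
    {s : ℝ} (hs : s = 1 ∨ s = -1) {u : ℝ × ℝ → ℝ} (hu : ContDiff ℝ ∞ u)
    (hu0 : ∀ θ ∈ Icc (-(π / 2)) (π / 2), u (s * (α + β * cos θ), β * sin θ) = 0)
    (L : ℝ) (hL : 1 ≤ L) :
    L ^ 2 * BW α β s χ u ≤
      C * L ^ 4 * (∫ p in Wg α β s, (u p) ^ 2) + ε * (∫ p in Wg α β s, (pdx u p) ^ 2) +
      C * L ^ 2 * (∫ p in Wg α β s, (lap u p - L ^ 2 * u p) ^ 2) := by
  have hss : s * s = 1 := by rcases hs with h | h <;> simp [h]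
  have h := H (fun p => u (s * (α + p.1), p.2)) (by fun_prop) hu0 L hL
  have hl : ∀ p : ℝ × ℝ, lap (fun p => u (s * (α + p.1), p.2)) p = lap u (s * (α + p.1), p.2) := by
    intro p
    have e : pdx (pdx (fun p => u (s * (α + p.1), p.2))) p =
        pdx (pdx u) (s * (α + p.1), p.2) := by
      rw [pdx_T hu]
      have hv : ContDiff ℝ ∞ (fun p => s * pdx u p) := by
        have := contDiff_pdx hu
        fun_prop
      rw [pdx_T hv α s]
      have : pdx (fun p => s * pdx u p) = fun p => s * pdx (pdx u) p := by
        funext ⟨x, y⟩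
        exact ((hasDx (contDiff_pdx hu) x y).const_mul s).deriv
      rw [this]
      simp only [← mul_assoc, hss, one_mul]
    unfold lap
    rw [e, pdy_T, pdy_T]
  simp only [hl] at h
  rw [pdx_T hu, pdy_T] at h
  have e2 : ∀ p : ℝ × ℝ, (s * pdx u (s * (α + p.1), p.2)) ^ 2 =
      (pdx u (s * (α + p.1), p.2)) ^ 2 := by
    intro p; rw [mul_pow, sq s, hss, one_mul]
  simp only [e2] at h
  rw [integral_Wg hs (fun q => (u q) ^ 2), integral_Wg hs (fun q => (pdx u q) ^ 2),
    integral_Wg hs (fun q => (lap u q - L ^ 2 * u q) ^ 2)] at h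
  exact h

/-- Region II estimate, second version: for `χ` smooth, supported in
`{|y| > β/20}`, equal to `-1` for `y ≤ -β/10` and `1` for `y ≥ β/10`, and every `ε > 0`,
there are `C > 0` and `λ₀ > 0` such that every real Dirichlet quasimode datum with
`λ ≥ λ₀` satisfies
`λ² ∫_{∂S ∩ W} w² χ(y)(∂_y u)(∂_N u) dl ≤ C λ⁴ ‖u‖²_{L²(W)} + ε ∫_S (∂_x u)² + C λ² ‖f‖²`. -/
theorem stmt16 (α β : ℝ) (hα : 0 < α) (hβ : 0 < β)
    (χ : ℝ → ℝ) (hχ : ContDiff ℝ (⊤ : ℕ∞) χ)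
    (hχsupp : Function.support χ ⊆ {y : ℝ | β / 20 < |y|})
    (hχm : ∀ y, y ≤ -(β / 10) → χ y = -1)
    (hχp : ∀ y, β / 10 ≤ y → χ y = 1) :
    ∀ ε > 0, ∃ C > 0, ∃ lam₀ > 0, ∀ d : QMDatum α β, d.lam ≥ lam₀ →
      d.lam ^ 2 *
        bdryIntW α β (fun p n => (|p.1| - α) ^ 2 * χ p.2 * pdy d.u p * nderiv d.u p n) ≤
        C * d.lam ^ 4 * (∫ p in Wings α β, (d.u p) ^ 2) +
        ε * (∫ p in Stadium α β, (pdx d.u p) ^ 2) +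
        C * d.lam ^ 2 * (∫ p in Stadium α β, (d.f p) ^ 2) := by
  intro ε hε
  obtain ⟨C, hC, H⟩ := half hβ hχ hε
  refine ⟨C, hC, 1, one_pos, ?_⟩
  intro d hL
  obtain ⟨V, hV, hSV, hu⟩ := d.smooth
  obtain ⟨u, U, hU, hSU, hus, heq⟩ := extend (isClosed_Stadium α β) hV hSV hu
  have hx := eqOn_pdx hU heq
  have hy := eqOn_pdy hU heq
  have hxx := eqOn_pdx hU hx
  have hyy := eqOn_pdy hU hy
  have hWS : Wings α β ⊆ Stadium α β := subset_union_right
  have hpi := Real.pi_pos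
  have hbd : ∀ s : ℝ, (s = 1 ∨ s = -1) → ∀ θ ∈ Icc (-(π / 2)) (π / 2),
      |s * (α + β * cos θ)| - α = β * cos θ ∧
      (s * (α + β * cos θ), β * sin θ) ∈ Stadium α β ∧
      (s * (α + β * cos θ), β * sin θ) ∈ StadiumBoundary α β := by
    intro s hs θ hθ
    have hc : 0 ≤ cos θ := cos_nonneg_of_neg_pi_div_two_le_of_le hθ.1 hθ.2
    have hbc : 0 ≤ β * cos θ := by positivity
    have ha : |s * (α + β * cos θ)| - α = β * cos θ := by
      have : |s| = 1 := by rcases hs with h | h <;> simp [h]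
      rw [abs_mul, this, abs_of_nonneg (by linarith)]; ring
    have hsq : (β * cos θ) ^ 2 + (β * sin θ) ^ 2 = β ^ 2 := by
      linear_combination β ^ 2 * sin_sq_add_cos_sq θ
    refine ⟨ha, hWS ?_, ?_⟩
    · rw [Wings_eq]
      rcases hs with h | h
      · left
        refine ⟨?_, ?_⟩
        · simp only [h]; nlinarith
        · simp only [h]; linarith
      · right
        refine ⟨?_, ?_⟩
        · simp only [h]; nlinarith
        · simp only [h]; linarith
    · right
      refine ⟨?_, ?_⟩
      · simp only [ha]; exact hsq
      · simp only []; linarith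
  have hlap : ∀ p ∈ Stadium α β, d.f p = lap u p - d.lam ^ 2 * u p := by
    intro p hp
    rw [← d.eqn p hp, lap, lap, hxx (hSU hp), hyy (hSU hp), heq (hSU hp)]
  have W1 := wing hC H (s := 1) (Or.inl rfl) hus (fun θ hθ => by
    have := hbd 1 (Or.inl rfl) θ hθ
    rw [← heq (hSU this.2.1)]; exact d.dirichlet _ this.2.2) d.lam hL
  have W2 := wing hC H (s := -1) (Or.inr rfl) hus (fun θ hθ => by
    have := hbd (-1) (Or.inr rfl) θ hθ
    rw [← heq (hSU this.2.1)]; exact d.dirichlet _ this.2.2) d.lam hL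
  have cu := hus.continuous
  have cx := (contDiff_pdx hus).continuous
  have cy := (contDiff_pdy hus).continuous
  have cχ := hχ.continuous
  have cl : Continuous (lap u) := continuous_lap hus
  have hB : bdryIntW α β (fun p n => (|p.1| - α) ^ 2 * χ p.2 * pdy d.u p * nderiv d.u p n) =
      BW α β 1 χ u + BW α β (-1) χ u := by
    unfold bdryIntW BW
    rw [← mul_add, ← intervalIntegral.integral_add]
    · congr 1
      apply intervalIntegral.integral_congr
      intro θ hθ
      rw [uIcc_of_le (by linarith)] at hθ
      obtain ⟨a1, a2, -⟩ := hbd 1 (Or.inl rfl) θ hθ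
      obtain ⟨b1, b2, -⟩ := hbd (-1) (Or.inr rfl) θ hθ
      have e1 : 1 * (α + β * cos θ) = α + β * cos θ := one_mul _
      have e2 : -1 * (α + β * cos θ) = -(α + β * cos θ) := neg_one_mul _
      rw [e1] at a1 a2
      rw [e2] at b1 b2
      simp only [nderiv, e1, e2, a1, b1, hx (hSU a2), hy (hSU a2), hx (hSU b2), hy (hSU b2)]
      ring
    · apply Continuous.intervalIntegrable
      fun_prop
    · apply Continuous.intervalIntegrable
      fun_prop
  have int : ∀ h : ℝ × ℝ → ℝ, Continuous h → IntegrableOn h (Stadium α β) := fun h hh =>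
    hh.continuousOn.integrableOn_compact (isCompact_Stadium hα hβ)
  have hms : MeasurableSet (Stadium α β) := (isClosed_Stadium α β).measurableSet
  have split : ∀ h : ℝ × ℝ → ℝ, Continuous h →
      ∫ p in Wings α β, h p = (∫ p in Wg α β 1, h p) + ∫ p in Wg α β (-1), h p := by
    intro h hh
    have i := (int h hh).mono_set hWS
    rw [Wings_eq] at i ⊢
    apply setIntegral_union _ (isClosed_Wg α β (-1)).measurableSet
      (i.mono_set subset_union_left) (i.mono_set subset_union_right)
    rw [Set.disjoint_left]
    rintro ⟨x, y⟩ ⟨-, h1⟩ ⟨-, h2⟩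
    simp only at h1 h2
    linarith
  have mono : ∀ h : ℝ × ℝ → ℝ, Continuous h → (∀ p, 0 ≤ h p) →
      ∫ p in Wings α β, h p ≤ ∫ p in Stadium α β, h p := by
    intro h hh h0
    exact setIntegral_mono_set (int h hh) (ae_of_all _ h0) hWS.eventuallyLE
  have E1 : ∫ p in Wings α β, (d.u p) ^ 2 = ∫ p in Wings α β, (u p) ^ 2 := by
    apply setIntegral_congr_fun
    · rw [Wings_eq]
      exact (isClosed_Wg α β 1).measurableSet.union (isClosed_Wg α β (-1)).measurableSet
    · intro p hp
      simp only [heq (hSU (hWS hp))]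
  have E2 : ∫ p in Stadium α β, (pdx d.u p) ^ 2 = ∫ p in Stadium α β, (pdx u p) ^ 2 := by
    apply setIntegral_congr_fun hms
    intro p hp
    simp only [hx (hSU hp)]
  have E3 : ∫ p in Stadium α β, (d.f p) ^ 2 =
      ∫ p in Stadium α β, (lap u p - d.lam ^ 2 * u p) ^ 2 := by
    apply setIntegral_congr_fun hms
    intro p hp
    simp only [hlap p hp]
  rw [hB, E1, E2, E3]
  have M2 := mono (fun p => (pdx u p) ^ 2) (by fun_prop) (fun p => sq_nonneg _)
  have M3 := mono (fun p => (lap u p - d.lam ^ 2 * u p) ^ 2) (by fun_prop) (fun p => sq_nonneg _)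
  have S1 := split (fun p => (u p) ^ 2) (by fun_prop)
  have S2 := split (fun p => (pdx u p) ^ 2) (by fun_prop)
  have S3 := split (fun p => (lap u p - d.lam ^ 2 * u p) ^ 2) (by fun_prop)
  have M2' := mul_le_mul_of_nonneg_left M2 hε.le
  have M3' := mul_le_mul_of_nonneg_left M3 (show 0 ≤ C * d.lam ^ 2 by positivity)
  rw [S2] at M2'
  rw [S3] at M3'
  rw [S1]
  linarith
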